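/- Let R be a K-vector space and let M be the operation on R-decorated planar rooted trees defined recursively by M(B_+^x(f_1); f_2) = B_+^x(f_1 ⋆ f_2). Then M satisfies the brace identity M(M(t; f_2); f_3) = M(t; f_2 ⋆ f_3) for every decorated tree t and all decorated forests f_2, f_3; consequently R^𝒯, with the operations M_{1q}(t; s_1⋯s_q) = M(t; s_1⋯s_q), is a brace algebra. -/

import Mathlib

/-! Common setup: `R`-decorated planar rooted trees, decorated forests,
the free module `R^𝒯` they span, and the Loday–Ronco product on `T(R^𝒯)`
induced by the recursive brace operation `M(B₊ˣ(f₁); f₂) = B₊ˣ(f₁ ⋆ f₂)`. -/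

/-- Planar rooted trees with vertices decorated by elements of `R`. -/
inductive PTree (R : Type*) : Type _
  | node : R → List (PTree R) → PTree R

section

variable (K : Type*) [Field K]
variable {R : Type*}

/-- All splittings of a list into a prefix and a suffix. -/
def splits {α : Type*} (l : List α) : List (List α × List α) :=
  (List.range (l.length + 1)).map fun i => (l.take i, l.drop i)

/-- All factorizations of a list into `k` (possibly empty) consecutive factors. -/
def splitsN {α : Type*} : ℕ → List α → List (List (List α))
  | 0, l => if l.isEmpty then [[]] else []
  | k + 1, l => (splits l).flatMap fun p => (splitsN k p.2).map fun r => p.1 :: r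

/-- Decorated forests: words of decorated trees. -/
abbrev Forest (R : Type*) := List (PTree R)

/-- `B₊ˣ` : grafting of a decorated forest onto a new root decorated by `x`. -/
def Bplus (x : R) (f : Forest R) : PTree R := PTree.node x f

variable (R)

/-- The space `R^𝒯` spanned by the decorated trees. -/
abbrev TreeMod := PTree R →₀ K

/-- The space `T(R^𝒯)` of decorated forests. -/
abbrev ForestMod := Forest R →₀ K

variable {R K}

/-- The element of `T(R^𝒯)` obtained from a word whose letters are linear
combinations of decorated trees, expanding multilinearly (in particular a word
containing the letter `0` gives `0`). -/
noncomputable def wordOf : List (TreeMod K R) → ForestMod K R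
  | [] => Finsupp.single ([] : Forest R) 1
  | a :: rest => a.sum fun t c => c • Finsupp.mapDomain (List.cons t) (wordOf rest)

/-- Extension `M(F;G)` of the brace operation to pairs of forests:
`M(1;1) = 0`, `M(1;s) = s` and `M(t;G) = M(t;G)` for a single tree `t`
(so `M(t;1) = t`), `M(F;G) = 0` if `F` has more than one tree. -/
noncomputable def MextF (Mh : PTree R → Forest R → TreeMod K R) : Forest R → Forest R → TreeMod K R
  | [], [] => 0
  | [], [s] => Finsupp.single s 1
  | [], _ :: _ :: _ => 0
  | [t], ys => Mh t ys
  | _ :: _ :: _, _ => 0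

/-- The Loday–Ronco product `X ⋆ Y = Σ_{k≥1} Σ_{X=X¹⋯X^k, Y=Y¹⋯Y^k}
M(X¹;Y¹)⋯M(X^k;Y^k)` built from a brace operation `Mh` on decorated trees
(with `1 ⋆ 1 = 1`; the terms with `k > |X| + |Y|` vanish, each containing the
letter `M(1;1) = 0`). -/
noncomputable def starRHS (Mh : PTree R → Forest R → TreeMod K R) : Forest R → Forest R → ForestMod K R
  | [], [] => Finsupp.single ([] : Forest R) 1
  | X, Y =>
    ((List.range (X.length + Y.length)).flatMap fun k =>
      (splitsN (k + 1) X).flatMap fun Xs =>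
        (splitsN (k + 1) Y).map fun Ys =>
          wordOf (List.zipWith (MextF Mh) Xs Ys)).sum

/-- `Mh` and `star` satisfy the defining recursion of the brace operation on
decorated trees: `M(B₊ˣ(f₁); f₂) = B₊ˣ(f₁ ⋆ f₂)` (with `B₊ˣ` extended linearly),
where `⋆` is the Loday–Ronco product built from `Mh`. -/
def IsTreeBrace (Mh : PTree R → Forest R → TreeMod K R)
    (star : Forest R → Forest R → ForestMod K R) : Prop :=
  (∀ (x : R) (f₁ f₂ : Forest R),
      Mh (Bplus x f₁) f₂ = Finsupp.mapDomain (Bplus x) (star f₁ f₂)) ∧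
  (∀ X Y : Forest R, star X Y = starRHS Mh X Y)

end

section

variable {K : Type*} [Field K] {R : Type*}

/-- The list of letters (each a linear combination of decorated trees) of the word
`z₁ ⋯ {y₁; z_{k₁},…} ⋯ {yₙ; z_{kₙ},…} ⋯ z_m` on the right-hand side of the brace
relation, for a factorization `Zs = P₀B₁P₁⋯BₙPₙ` of `zs` into `2n+1` consecutive
(possibly empty) blocks. -/
noncomputable def braceWordT (Mh : PTree R → Forest R → TreeMod K R) :
    List (Forest R) → Forest R → List (TreeMod K R)
  | [P], [] => P.map fun s => Finsupp.single s 1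
  | P :: B :: rest, y :: ys =>
      (P.map fun s => Finsupp.single s 1) ++ Mh y B :: braceWordT Mh rest ys
  | _, _ => []

/-! Isolating the factor of `X` that contains its first tree gives
`(x X) ⋆ Y = ∑_{Y = P B Q} P · M(x; B) · (X ⋆ Q)`. Two inductions on this formula show that `⋆` is
compatible with deconcatenation and that `X ⋆ Z` may be expanded around any tree of `X`. Hence, if
the brace identity holds for the trees of a forest `x X`, both `((x X) ⋆ Y) ⋆ Z` and
`(x X) ⋆ (Y ⋆ Z)` are the sum, over `Y = Y₁Y₂Y₃` and `Z = Z₁Z₂Z₃`, of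
`(Y₁ ⋆ Z₁) · M(M(x; Y₂); Z₂) · ((X ⋆ Y₃) ⋆ Z₃)`. This associativity for `f`, `Y`, `Z`, grafted onto
a root, is the brace identity for `B₊ˣ(f)`, whose branches are smaller trees. The right-hand side of
the brace relation is the first formula iterated over the trees of `X`. -/

/-- `x ⊳ φ` is the value at `x` of the linear extension of `φ`; in `x ⊳ fun i => …` the variable
`i` runs over the basis elements occurring in `x`. -/
local notation:66 x:67 " ⊳ " φ:66 => Finsupp.linearCombination _ φ x

section SumSplits

variable {α W : Type*} [AddCommMonoid W]

theorem splits_cons (a : α) (l : List α) :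
    splits (a :: l) = ([], a :: l) :: (splits l).map fun p => (a :: p.1, p.2) := by
  simp [splits, List.range_succ_eq_map (n := l.length + 1), Function.comp_def]

theorem append_eq_of_mem_splits {l : List α} {p : List α × List α} (hp : p ∈ splits l) :
    p.1 ++ p.2 = l := by
  obtain ⟨i, -, rfl⟩ := List.mem_map.1 hp
  exact List.take_append_drop i l

/-- The sum of `φ p q` over all deconcatenations `l = p q`: the deconcatenation coproduct of `l`,
evaluated by `φ`. -/
def sumSplits (l : List α) (φ : List α → List α → W) : W :=
  ((splits l).map fun p => φ p.1 p.2).sum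

/-- The sum of `φ a b c` over all deconcatenations `l = a b c`: the iterated deconcatenation
coproduct of `l`, evaluated by `φ`. -/
def sumSplits₃ (l : List α) (φ : List α → List α → List α → W) : W :=
  sumSplits l fun p q => sumSplits q (φ p)

@[simp]
theorem sumSplits_nil (φ : List α → List α → W) : sumSplits [] φ = φ [] [] := by
  simp [sumSplits, splits]

theorem sumSplits_cons (a : α) (l : List α) (φ : List α → List α → W) :
    sumSplits (a :: l) φ = φ [] (a :: l) + sumSplits l fun p q => φ (a :: p) q := by
  simp [sumSplits, splits_cons, Function.comp_def]

theorem sumSplits_congr {l : List α} {φ ψ : List α → List α → W}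
    (h : ∀ p q, p ++ q = l → φ p q = ψ p q) : sumSplits l φ = sumSplits l ψ :=
  congrArg List.sum <| List.map_congr_left fun _ hp => h _ _ (append_eq_of_mem_splits hp)

@[simp]
theorem sumSplits_zero (l : List α) : sumSplits l (fun _ _ => (0 : W)) = 0 := by
  simp [sumSplits]

theorem sumSplits_add (l : List α) (φ ψ : List α → List α → W) :
    sumSplits l (fun p q => φ p q + ψ p q) = sumSplits l φ + sumSplits l ψ :=
  List.sum_map_add

theorem map_sumSplits {V F : Type*} [AddCommMonoid V] [FunLike F W V] [AddMonoidHomClass F W V]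
    (f : F) (l : List α) (φ : List α → List α → W) :
    f (sumSplits l φ) = sumSplits l fun p q => f (φ p q) := by
  simp [sumSplits, map_list_sum, Function.comp_def]

theorem map_sumSplits₃ {V F : Type*} [AddCommMonoid V] [FunLike F W V] [AddMonoidHomClass F W V]
    (f : F) (l : List α) (φ : List α → List α → List α → W) :
    f (sumSplits₃ l φ) = sumSplits₃ l fun a b c => f (φ a b c) := by
  simp only [sumSplits₃, map_sumSplits]

theorem sumSplits₃_add (l : List α) (φ ψ : List α → List α → List α → W) :
    sumSplits₃ l (fun a b c => φ a b c + ψ a b c) = sumSplits₃ l φ + sumSplits₃ l ψ := by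
  simp only [sumSplits₃, sumSplits_add]

theorem sumSplits_list_sum {β : Type*} (l : List α) (m : List β) (φ : β → List α → List α → W) :
    sumSplits l (fun p q => (m.map fun b => φ b p q).sum) =
      (m.map fun b => sumSplits l (φ b)).sum := by
  induction m with
  | nil => simp
  | cons b m ih => simp [sumSplits_add, ih]

theorem sumSplits_finset_sum {β : Type*} (l : List α) (s : Finset β)
    (φ : β → List α → List α → W) :
    sumSplits l (fun p q => ∑ b ∈ s, φ b p q) = ∑ b ∈ s, sumSplits l (φ b) := by
  induction s using Finset.cons_induction with
  | empty => simp
  | cons b s hb ih => simp [sumSplits_add, ih]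

theorem sumSplits_comm {β : Type*} (l : List α) (m : List β)
    (φ : List α → List α → List β → List β → W) :
    sumSplits l (fun p q => sumSplits m (φ p q)) =
      sumSplits m fun r s => sumSplits l fun p q => φ p q r s :=
  sumSplits_list_sum l (splits m) fun r p q => φ p q r.1 r.2

theorem sumSplits_coassoc (l : List α) (φ : List α → List α → List α → W) :
    sumSplits l (fun p q => sumSplits p fun a b => φ a b q) = sumSplits₃ l φ := by
  induction l generalizing φ with
  | nil => simp [sumSplits₃]
  | cons a l ih =>
    simp only [sumSplits₃] at ih ⊢
    simp [sumSplits_cons, sumSplits_add, ih, add_assoc]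

theorem sumSplits_sumSplits₃ (l : List α) (φ : List α → List α → List α → List α → W) :
    sumSplits l (fun p d => sumSplits₃ p fun a b c => φ a b c d) =
      sumSplits₃ l fun a b q => sumSplits q (φ a b) := by
  simp only [sumSplits₃]
  rw [sumSplits_coassoc l fun a q d => sumSplits q fun b c => φ a b c d]
  refine congrArg (sumSplits l) (funext₂ fun a q => ?_)
  exact sumSplits_coassoc q (φ a)

theorem sumSplits₃_sumSplits (l : List α) (φ : List α → List α → List α → List α → W) :
    sumSplits₃ l (fun p c d => sumSplits p fun a b => φ a b c d) =
      sumSplits l fun a q => sumSplits₃ q (φ a) := by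
  calc
    _ = sumSplits l fun p q => sumSplits p fun a b => sumSplits q fun c d => φ a b c d :=
      congrArg (sumSplits l) (funext₂ fun p q => sumSplits_comm q p _)
    _ = sumSplits l fun a q => sumSplits₃ q (φ a) :=
      sumSplits_coassoc l fun a b q => sumSplits q (φ a b)

theorem sumSplits₃_sumSplits₃ (l : List α)
    (φ : List α → List α → List α → List α → List α → W) :
    sumSplits₃ l (fun p d e => sumSplits₃ p fun a b c => φ a b c d e) =
      sumSplits₃ l fun a b q => sumSplits₃ q (φ a b) := by
  calc
    _ = sumSplits l fun p q => sumSplits₃ p fun a b c => sumSplits q fun d e => φ a b c d e := by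
      refine congrArg (sumSplits l) (funext₂ fun p q => ?_)
      simp only [sumSplits₃, sumSplits_comm q]
    _ = sumSplits₃ l fun a b q => sumSplits₃ q (φ a b) :=
      sumSplits_sumSplits₃ l fun a b c q => sumSplits q (φ a b c)

theorem splitsN_one (l : List α) : splitsN 1 l = [[l]] := by
  induction l with
  | nil => rfl
  | cons a l ih =>
    have := congrArg (List.map (List.modifyHead (a :: ·))) ih
    simpa [splitsN, splits_cons, List.flatMap_map, List.map_flatMap, Function.comp_def] using this

theorem sumSplits_append_cons (l : List α) (a : α) (m : List α) (φ : List α → List α → W) :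
    sumSplits (l ++ a :: m) φ =
      sumSplits l (fun p q => φ p (q ++ a :: m)) +
        sumSplits m fun p q => φ (l ++ a :: p) q := by
  induction l generalizing φ with
  | nil => simp [sumSplits_cons]
  | cons b l ih => simp [sumSplits_cons, ih, add_assoc]

theorem sum_splitsN_succ (k : ℕ) (l : List α) (g : List (List α) → W) :
    ((splitsN (k + 1) l).map g).sum =
      sumSplits l fun p q => ((splitsN k q).map fun r => g (p :: r)).sum := by
  simp [splitsN, sumSplits, List.flatMap, Function.comp_def]

end SumSplits

section LinearExtension

variable {K ι α W : Type*} [CommSemiring K] [AddCommMonoid W] [Module K W]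

theorem linearCombination_fun_add (x : ι →₀ K) (φ ψ : ι → W) :
    (x ⊳ fun i => φ i + ψ i) = (x ⊳ φ) + x ⊳ ψ := by
  simp [Finsupp.linearCombination_apply]

theorem linearCombination_sumSplits (x : ι →₀ K) (l : List α) (φ : List α → List α → ι → W) :
    (x ⊳ fun i => sumSplits l fun p q => φ p q i) = sumSplits l fun p q => x ⊳ φ p q := by
  induction l generalizing φ with
  | nil => simp
  | cons a l ih => simp only [sumSplits_cons, linearCombination_fun_add, ih]

theorem linearCombination_sumSplits₃ (x : ι →₀ K) (l : List α)
    (φ : List α → List α → List α → ι → W) :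
    (x ⊳ fun i => sumSplits₃ l fun a b c => φ a b c i) = sumSplits₃ l fun a b c => x ⊳ φ a b c := by
  simp only [sumSplits₃, linearCombination_sumSplits]

variable (K α) in
/-- The concatenation product of the tensor algebra, modelled on linear combinations of words. -/
noncomputable def concat : (List α →₀ K) →ₗ[K] (List α →₀ K) →ₗ[K] List α →₀ K :=
  Finsupp.linearCombination K fun f => Finsupp.lmapDomain K K (f ++ ·)

variable (K α) in
/-- The concatenation product of a letter, that is, a linear combination of elements of `α`, with
an element of the tensor algebra. -/
noncomputable def prepend : (α →₀ K) →ₗ[K] (List α →₀ K) →ₗ[K] List α →₀ K :=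
  Finsupp.linearCombination K fun t => Finsupp.lmapDomain K K (List.cons t)

theorem linearCombination_concat (x y : List α →₀ K) (φ : List α → W) :
    concat K α x y ⊳ φ = x ⊳ fun f => y ⊳ fun g => φ (f ++ g) := by
  induction x using Finsupp.induction_linear with
  | zero => simp
  | add x₁ x₂ h₁ h₂ => simp [h₁, h₂]
  | single f c => simp [concat, Finsupp.linearCombination_mapDomain, Function.comp_def]

theorem linearCombination_prepend (u : α →₀ K) (x : List α →₀ K) (φ : List α → W) :
    prepend K α u x ⊳ φ = u ⊳ fun t => x ⊳ fun g => φ (t :: g) := by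
  induction u using Finsupp.induction_linear with
  | zero => simp
  | add u₁ u₂ h₁ h₂ => simp [h₁, h₂]
  | single f c => simp [prepend, Finsupp.linearCombination_mapDomain, Function.comp_def]

theorem linearCombination_single_one (x : ι →₀ K) : (x ⊳ fun i => Finsupp.single i 1) = x := by
  simp [Finsupp.linearCombination_apply]

theorem linearCombination_concat_single (x y : List α →₀ K) :
    (x ⊳ fun f => concat K α (Finsupp.single f 1) y) = concat K α x y :=
  calc
    _ = concat K α (x ⊳ fun f => Finsupp.single f 1) y :=
      (LinearMap.map_finsupp_linearCombination (LinearMap.flip (concat K α) y) x).symm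
    _ = concat K α x y := by rw [linearCombination_single_one]

theorem linearCombination_concat_prepend {κ : Type*} (w : List α →₀ K) (x : ι →₀ K) (y : κ →₀ K)
    (φ : ι → α →₀ K) (ψ : κ → List α →₀ K) :
    (x ⊳ fun i => y ⊳ fun j => concat K α w (prepend K α (φ i) (ψ j))) =
      concat K α w (prepend K α (x ⊳ φ) (y ⊳ ψ)) := by
  have hprepend : prepend K α (x ⊳ φ) (y ⊳ ψ) = x ⊳ fun i => prepend K α (φ i) (y ⊳ ψ) :=
    LinearMap.map_finsupp_linearCombination (LinearMap.flip (prepend K α) (y ⊳ ψ)) x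
  rw [hprepend]
  simp only [LinearMap.map_finsupp_linearCombination, Function.comp_def]

theorem concat_assoc (x y z : List α →₀ K) :
    concat K α (concat K α x y) z = concat K α x (concat K α y z) := by
  rw [← linearCombination_single_one (concat K α (concat K α x y) z),
    ← linearCombination_single_one (concat K α x (concat K α y z))]
  simp only [linearCombination_concat, List.append_assoc]

theorem concat_prepend (u : α →₀ K) (x y : List α →₀ K) :
    concat K α (prepend K α u x) y = prepend K α u (concat K α x y) := by
  rw [← linearCombination_single_one (concat K α (prepend K α u x) y),
    ← linearCombination_single_one (prepend K α u (concat K α x y))]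
  simp only [linearCombination_concat, linearCombination_prepend, List.cons_append]

theorem concat_sumSplits₃ {β : Type*} (l : List β)
    (φ : List β → List β → List β → List α →₀ K) (y : List α →₀ K) :
    concat K α (sumSplits₃ l φ) y = sumSplits₃ l fun a b c => concat K α (φ a b c) y :=
  map_sumSplits₃ (V := List α →₀ K) (F := (List α →₀ K) →ₗ[K] List α →₀ K)
    (LinearMap.flip (concat K α) y) l φ

@[simp]
theorem concat_single_nil (y : List α →₀ K) : concat K α (Finsupp.single [] 1) y = y := by
  simp [concat, ← Function.id_def]

theorem prepend_single (a : α) (f : List α) :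
    prepend K α (Finsupp.single a 1) (Finsupp.single f 1) = Finsupp.single (a :: f) 1 := by
  simp [prepend]

theorem concat_single_single (f g : List α) :
    concat K α (Finsupp.single f 1) (Finsupp.single g 1) = Finsupp.single (f ++ g) 1 := by
  simp [concat]

theorem concat_single_cons (a : α) (f : List α) (y : List α →₀ K) :
    concat K α (Finsupp.single (a :: f) 1) y =
      prepend K α (Finsupp.single a 1) (concat K α (Finsupp.single f 1) y) := by
  rw [← prepend_single, concat_prepend]

end LinearExtension

section LodayRonco

variable (Mh : PTree R → Forest R → TreeMod K R)

local notation:70 X:71 " ⋆ " Y:71 => starRHS Mh X Y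

theorem wordOf_cons (u : TreeMod K R) (l : List (TreeMod K R)) :
    wordOf (u :: l) = prepend K _ u (wordOf l) := by
  simp [wordOf, prepend, Finsupp.linearCombination_apply, Finsupp.sum, LinearMap.sum_apply]

theorem wordOf_map_single_append (P : Forest R) (l : List (TreeMod K R)) :
    wordOf ((P.map fun s => Finsupp.single s 1) ++ l) =
      concat K _ (Finsupp.single P 1) (wordOf l) := by
  induction P with
  | nil => simp
  | cons s P ih => simp [wordOf_cons, concat_single_cons, ih]

/-- The part of the Loday–Ronco product `X ⋆ Y` coming from factorizations of `X` and `Y` into `k`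
factors. The value `k = 0` is allowed, so that `1 ⋆ 1 = 1` is the term `k = 0`. -/
noncomputable def starTerm (k : ℕ) (X Y : Forest R) : ForestMod K R :=
  ((splitsN k X).map fun Xs => ((splitsN k Y).map fun Ys =>
    wordOf (List.zipWith (MextF Mh) Xs Ys)).sum).sum

theorem starTerm_zero (X Y : Forest R) :
    starTerm Mh 0 X Y = if X = [] ∧ Y = [] then Finsupp.single [] 1 else 0 := by
  cases X <;> cases Y <;> simp [starTerm, splitsN, wordOf]

theorem starTerm_succ (k : ℕ) (X Y : Forest R) :
    starTerm Mh (k + 1) X Y = sumSplits X fun X₁ X₂ => sumSplits Y fun Y₁ Y₂ =>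
      prepend K _ (MextF Mh X₁ Y₁) (starTerm Mh k X₂ Y₂) := by
  simp only [starTerm, sum_splitsN_succ, List.zipWith_cons_cons, wordOf_cons, map_list_sum,
    List.map_map, Function.comp_def, sumSplits_list_sum]

theorem starTerm_eq_zero {k : ℕ} {X Y : Forest R} (hk : X.length + Y.length < k) :
    starTerm Mh k X Y = 0 := by
  induction k generalizing X Y with
  | zero => omega
  | succ k ih =>
    rw [starTerm_succ, ← sumSplits_zero X]
    refine sumSplits_congr fun X₁ X₂ hX => ?_
    rw [← sumSplits_zero Y]
    refine sumSplits_congr fun Y₁ Y₂ hY => ?_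
    subst hX hY
    match X₁, Y₁ with
    | [], [] => simp [MextF]
    | _ :: _, _ => rw [ih (by grind), map_zero]
    | [], _ :: _ => rw [ih (by grind), map_zero]

theorem star_eq_sum_starTerm {X Y : Forest R} {n : ℕ} (hn : X.length + Y.length < n) :
    X ⋆ Y = ∑ k ∈ Finset.range n, starTerm Mh k X Y := by
  rw [Finset.eventually_constant_sum (fun k hk => starTerm_eq_zero Mh hk) hn,
    Finset.sum_range_succ', starTerm_zero]
  by_cases h : X = [] ∧ Y = []
  · obtain ⟨rfl, rfl⟩ := h
    simp [starRHS]
  · have hstar : X ⋆ Y = ((List.range (X.length + Y.length)).flatMap fun k =>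
        (splitsN (k + 1) X).flatMap fun Xs => (splitsN (k + 1) Y).map fun Ys =>
          wordOf (List.zipWith (MextF Mh) Xs Ys)).sum := by
      cases X <;> cases Y <;> first | rfl | simp at h
    rw [hstar, if_neg h, add_zero]
    simp only [starTerm, List.flatMap, List.sum_flatten, List.map_map, Function.comp_def]
    rfl

theorem star_eq_sumSplits {X Y : Forest R} (h : ¬(X = [] ∧ Y = [])) :
    X ⋆ Y = sumSplits X fun X₁ X₂ => sumSplits Y fun Y₁ Y₂ =>
      prepend K _ (MextF Mh X₁ Y₁) (X₂ ⋆ Y₂) := by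
  rw [star_eq_sum_starTerm Mh (Nat.lt_succ_self _), Finset.sum_range_succ', starTerm_zero,
    if_neg h, add_zero]
  simp only [starTerm_succ, ← sumSplits_finset_sum, ← map_sum]
  refine sumSplits_congr fun X₁ X₂ hX => sumSplits_congr fun Y₁ Y₂ hY => ?_
  subst hX hY
  match X₁, Y₁ with
  | [], [] => simp [MextF]
  | _ :: _, _ => rw [← star_eq_sum_starTerm Mh (by grind)]
  | [], _ :: _ => rw [← star_eq_sum_starTerm Mh (by grind)]

theorem sumSplits_prepend_MextF_nil_cons (s : PTree R) (Y : Forest R)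
    (φ : Forest R → ForestMod K R) :
    sumSplits (s :: Y) (fun Y₁ Y₂ => prepend K _ (MextF Mh [] Y₁) (φ Y₂)) =
      prepend K _ (Finsupp.single s 1) (φ Y) := by
  cases Y <;> simp [sumSplits_cons, MextF]

theorem nil_star (Y : Forest R) : [] ⋆ Y = Finsupp.single Y 1 := by
  induction Y with
  | nil => rfl
  | cons s Y ih =>
    rw [star_eq_sumSplits Mh (by simp), sumSplits_nil,
      sumSplits_prepend_MextF_nil_cons Mh s Y fun Y₂ => [] ⋆ Y₂, ih, prepend_single]

theorem cons_star_eq_add (x : PTree R) (X Y : Forest R) :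
    (x :: X) ⋆ Y =
      sumSplits Y (fun Y₁ Y₂ => prepend K _ (MextF Mh [] Y₁) ((x :: X) ⋆ Y₂)) +
      sumSplits Y (fun Y₁ Y₂ => prepend K _ (Mh x Y₁) (X ⋆ Y₂)) := by
  rw [star_eq_sumSplits Mh (by simp)]
  cases X <;> simp [sumSplits_cons, MextF]

theorem cons_star (x : PTree R) (X Y : Forest R) :
    (x :: X) ⋆ Y = sumSplits₃ Y fun P B Q =>
      concat K _ (Finsupp.single P 1) (prepend K _ (Mh x B) (X ⋆ Q)) := by
  induction Y with
  | nil =>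
    rw [cons_star_eq_add]
    simp [sumSplits₃, MextF]
  | cons s Y ih =>
    rw [cons_star_eq_add, sumSplits_prepend_MextF_nil_cons Mh s Y ((x :: X) ⋆ ·), ih, add_comm]
    simp only [sumSplits₃, sumSplits_cons _ _ fun _ Q => sumSplits Q _, concat_single_nil,
      concat_single_cons, map_sumSplits]

theorem append_cons_star (A : Forest R) (t : PTree R) (B Z : Forest R) :
    (A ++ t :: B) ⋆ Z = sumSplits₃ Z fun Z₁ Z₂ Z₃ =>
      concat K _ (A ⋆ Z₁) (prepend K _ (Mh t Z₂) (B ⋆ Z₃)) := by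
  induction A generalizing Z with
  | nil => simp only [List.nil_append, nil_star, cons_star]
  | cons x A ih =>
    simp only [List.cons_append, cons_star, ih]
    simp only [concat_sumSplits₃, concat_assoc, concat_prepend]
    simp only [map_sumSplits₃]
    exact (sumSplits₃_sumSplits₃ (W := ForestMod K R) Z fun _ _ _ _ _ => _).symm

theorem star_sumSplits {W : Type*} [AddCommMonoid W] [Module K W] (Y Z : Forest R)
    (φ : Forest R → Forest R → W) :
    (Y ⋆ Z ⊳ fun g => sumSplits g φ) = sumSplits Y fun Y₁ Y₂ => sumSplits Z fun Z₁ Z₂ =>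
      Y₁ ⋆ Z₁ ⊳ fun g => Y₂ ⋆ Z₂ ⊳ φ g := by
  induction Y generalizing φ Z with
  | nil => simp [nil_star]
  | cons y Y ih =>
    simp only [cons_star, nil_star, map_sumSplits₃, linearCombination_concat,
      linearCombination_prepend, Finsupp.linearCombination_single, one_smul,
      sumSplits_append_cons, linearCombination_fun_add, sumSplits₃_add, ih,
      linearCombination_sumSplits, sumSplits_cons]
    congr 1
    · exact sumSplits₃_sumSplits Z fun _ _ _ _ => _
    · simp only [sumSplits₃, sumSplits_comm _ Y]
      refine congrArg (sumSplits Y) (funext₂ fun Y₁ Y₂ => ?_)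
      exact (sumSplits_sumSplits₃ Z fun _ _ _ _ => _).symm

theorem star_sumSplits₃ {W : Type*} [AddCommMonoid W] [Module K W] (Y Z : Forest R)
    (φ : Forest R → Forest R → Forest R → W) :
    (Y ⋆ Z ⊳ fun g => sumSplits₃ g φ) =
      sumSplits₃ Y fun Y₁ Y₂ Y₃ => sumSplits₃ Z fun Z₁ Z₂ Z₃ =>
        Y₁ ⋆ Z₁ ⊳ fun f => Y₂ ⋆ Z₂ ⊳ fun g => Y₃ ⋆ Z₃ ⊳ φ f g := by
  simp only [sumSplits₃, star_sumSplits, linearCombination_sumSplits]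
  refine congrArg (sumSplits Y) (funext₂ fun Y₁ Y' => ?_)
  rw [sumSplits_comm]

theorem star_assoc_of_brace_identity {X : Forest R}
    (hX : ∀ x ∈ X, ∀ Y Z : Forest R, (Mh x Y ⊳ fun u => Mh u Z) = Y ⋆ Z ⊳ Mh x)
    (Y Z : Forest R) : (X ⋆ Y ⊳ fun g => g ⋆ Z) = Y ⋆ Z ⊳ fun g => X ⋆ g := by
  induction X generalizing Y Z with
  | nil => simp [nil_star, linearCombination_single_one]
  | cons x X ih =>
    have hx := hX x List.mem_cons_self
    replace ih := ih fun y hy => hX y (List.mem_cons_of_mem x hy)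
    calc (x :: X) ⋆ Y ⊳ (fun g => g ⋆ Z)
      _ = sumSplits₃ Y fun Y₁ Y₂ Y₃ => sumSplits₃ Z fun Z₁ Z₂ Z₃ =>
            concat K _ (Y₁ ⋆ Z₁) (prepend K _ (Mh x Y₂ ⊳ fun u => Mh u Z₂)
              (X ⋆ Y₃ ⊳ fun g => g ⋆ Z₃)) := by
        simp only [cons_star, map_sumSplits₃, linearCombination_concat, linearCombination_prepend,
          Finsupp.linearCombination_single, one_smul, append_cons_star,
          linearCombination_sumSplits₃, linearCombination_concat_prepend]
      _ = sumSplits₃ Y fun Y₁ Y₂ Y₃ => sumSplits₃ Z fun Z₁ Z₂ Z₃ =>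
            concat K _ (Y₁ ⋆ Z₁) (prepend K _ (Y₂ ⋆ Z₂ ⊳ Mh x) (Y₃ ⋆ Z₃ ⊳ fun g => X ⋆ g)) := by
        simp only [hx, ih]
      _ = Y ⋆ Z ⊳ fun g => (x :: X) ⋆ g := by
        simp only [cons_star, star_sumSplits₃, linearCombination_concat_prepend,
          linearCombination_concat_single]

theorem PTree.induction_Bplus {p : PTree R → Prop}
    (graft : ∀ x f, (∀ t ∈ f, p t) → p (Bplus x f)) : ∀ t, p t
  | .node x f => graft x f fun t _ => PTree.induction_Bplus graft t

theorem brace_identity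
    (hM : ∀ (x : R) (f g : Forest R), Mh (Bplus x f) g = Finsupp.mapDomain (Bplus x) (f ⋆ g))
    (t : PTree R) (Y Z : Forest R) : (Mh t Y ⊳ fun u => Mh u Z) = Y ⋆ Z ⊳ Mh t := by
  induction t using PTree.induction_Bplus generalizing Y Z with
  | graft x f ih =>
    calc Mh (Bplus x f) Y ⊳ (fun u => Mh u Z)
      _ = f ⋆ Y ⊳ fun g => Finsupp.lmapDomain K K (Bplus x) (g ⋆ Z) := by
        rw [hM, Finsupp.linearCombination_mapDomain]
        simp only [Function.comp_def, hM, Finsupp.lmapDomain_apply]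
      _ = Finsupp.lmapDomain K K (Bplus x) (f ⋆ Y ⊳ fun g => g ⋆ Z) := by
        simp only [LinearMap.map_finsupp_linearCombination, Function.comp_def]
      _ = Finsupp.lmapDomain K K (Bplus x) (Y ⋆ Z ⊳ fun g => f ⋆ g) := by
        rw [star_assoc_of_brace_identity Mh fun y hy => ih y hy]
      _ = Y ⋆ Z ⊳ Mh (Bplus x f) := by
        simp only [LinearMap.map_finsupp_linearCombination, Function.comp_def,
          Finsupp.lmapDomain_apply, ← hM]

theorem sum_wordOf_braceWordT (ys zs : Forest R) :
    ((splitsN (2 * ys.length + 1) zs).map fun Zs => wordOf (braceWordT Mh Zs ys)).sum =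
      ys ⋆ zs := by
  induction ys generalizing zs with
  | nil =>
    simpa [splitsN_one, braceWordT, nil_star, wordOf, concat_single_single] using
      wordOf_map_single_append (K := K) zs []
  | cons y ys ih =>
    rw [cons_star, List.length_cons,
      show 2 * (ys.length + 1) + 1 = 2 * ys.length + 1 + 1 + 1 by ring]
    simp only [sum_splitsN_succ (2 * ys.length + 1 + 1), sum_splitsN_succ (2 * ys.length + 1),
      sumSplits₃, braceWordT, wordOf_map_single_append, wordOf_cons, ← ih, map_list_sum,
      List.map_map, Function.comp_def]

end LodayRonco

/-- Let `R` be a `K`-vector space and `M` the operation on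
`R`-decorated planar rooted trees defined recursively by
`M(B₊ˣ(f₁); f₂) = B₊ˣ(f₁ ⋆ f₂)`.  Then `M` satisfies the brace identity
`M(M(t; f₂); f₃) = M(t; f₂ ⋆ f₃)` for every decorated tree `t` and all decorated
forests `f₂, f₃` (where `M` is extended linearly to `R^𝒯` in the first slot and
to `T(R^𝒯)` in the second); consequently `R^𝒯`, with the operations
`M_{1q}(t; s₁⋯s_q) = M(t; s₁⋯s_q)`, is a brace algebra, i.e. these operations
satisfy the brace relation. -/
theorem tree_brace_identity_and_brace_relation
    (Mh : PTree R → Forest R → TreeMod K R)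
    (star : Forest R → Forest R → ForestMod K R)
    (h : IsTreeBrace Mh star) :
    (∀ (t : PTree R) (f₂ f₃ : Forest R),
        (Mh t f₂).sum (fun u c => c • Mh u f₃) =
        (star f₂ f₃).sum fun g c => c • Mh t g) ∧
    (∀ (t : PTree R) (ys zs : Forest R),
        (Mh t ys).sum (fun u c => c • Mh u zs) =
          ((splitsN (2 * ys.length + 1) zs).map fun Zs =>
            (wordOf (braceWordT Mh Zs ys)).sum fun g c => c • Mh t g).sum) := by
  obtain ⟨hM, hstar⟩ := h
  obtain rfl : star = starRHS Mh := funext₂ hstar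
  have hbrace := brace_identity Mh hM
  refine ⟨hbrace, fun t ys zs => (hbrace t ys zs).trans ?_⟩
  rw [← sum_wordOf_braceWordT, map_list_sum, List.map_map]
  rfl

end
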